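/- arXiv:1011.2719 — 2 statements merged into one kernel-verified Lean document; each statement's English description precedes it below -/
import Mathlib

section
/- Let G be a port-labeled graph and let n̂ be the number of equivalence classes of the relation 'having equal views' (u ∼ v iff V(u) = V(v)) on the nodes of G. For any nodes u, v of G, if V^{n̂−1}(u) = V^{n̂−1}(v), then V^t(u) = V^t(v) for every t ≥ 0. -/
/-- A port-labeled graph: a finite connected simple undirected graph in which each
node `v` of degree `deg v` has its incident edges assigned distinct port numbers
`1,…,deg v`.  It is encoded by a fixed-point-free involution on darts: the dart
`(v, i)` (for `i < deg v`, representing port `i+1` at `v`) is matched with the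
dart `(u, j)` when the edge with port `i+1` at `v` leads to `u` entering via port `j+1`. -/
structure PortGraph where
  /-- number of nodes; the nodes are `Fin n` -/
  n : ℕ
  npos : 0 < n
  /-- degree of each node -/
  deg : Fin n → ℕ
  /-- the dart-matching function (only its values on `i < deg v` are relevant) -/
  mtch : Fin n → ℕ → Fin n × ℕ
  mtch_lt : ∀ (v : Fin n) (i : ℕ), i < deg v → (mtch v i).2 < deg (mtch v i).1
  mtch_invol : ∀ (v : Fin n) (i : ℕ), i < deg v →
      mtch (mtch v i).1 (mtch v i).2 = (v, i)
  /-- no self-loops -/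
  no_loops : ∀ (v : Fin n) (i : ℕ), i < deg v → (mtch v i).1 ≠ v
  /-- no multiple edges -/
  no_multi : ∀ (v : Fin n) (i j : ℕ), i < deg v → j < deg v →
      (mtch v i).1 = (mtch v j).1 → i = j
  /-- connectivity -/
  connected : ∀ u v : Fin n,
    Relation.ReflTransGen (fun a b => ∃ i < deg a, (mtch a i).1 = b) u v

/-- Adjacency in a port-labeled graph. -/
def PortGraph.Adj (G : PortGraph) (u v : Fin G.n) : Prop :=
  ∃ i < G.deg u, (G.mtch u i).1 = v

/-- Rooted trees with edges labeled by pairs of port numbers, used as (truncated) views. -/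
inductive ViewTree : Type
  | node : List (ℕ × ℕ × ViewTree) → ViewTree

/-- The truncated view `V^t(v)` at depth `t` from node `v`. -/
def PortGraph.view (G : PortGraph) : ℕ → Fin G.n → ViewTree
  | 0, _ => ViewTree.node []
  | t + 1, v => ViewTree.node <| (List.range (G.deg v)).map fun i =>
      (i + 1, (G.mtch v i).2 + 1, G.view t (G.mtch v i).1)

/-- The equal-views equivalence relation (`u ∼ v` iff `V(u) = V(v)`). -/
def PortGraph.viewSetoid (G : PortGraph) : Setoid (Fin G.n) where
  r u v := ∀ t, G.view t u = G.view t v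
  iseqv := ⟨fun _ _ => rfl, fun h t => (h t).symm, fun h h' t => (h t).trans (h' t)⟩

/-- `n̂`: the number of equivalence classes of the equal-views relation
(the number of nodes of the quotient graph). -/
noncomputable def PortGraph.nhat (G : PortGraph) : ℕ := Nat.card (Quotient G.viewSetoid)

/-- `G.reachIn k u v` means there is a walk of length at most `k` from `u` to `v`,
i.e. the graph distance from `u` to `v` is at most `k`. -/
def PortGraph.reachIn (G : PortGraph) : ℕ → Fin G.n → Fin G.n → Prop
  | 0, u, v => u = v
  | k + 1, u, v => G.reachIn k u v ∨ ∃ w, G.reachIn k u w ∧ G.Adj w v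

/-- A port-preserving isomorphism between port-labeled graphs. -/
def IsPortIso (G H : PortGraph) (e : Fin G.n ≃ Fin H.n) : Prop :=
  (∀ v, H.deg (e v) = G.deg v) ∧
  ∀ (v : Fin G.n) (i : ℕ), i < G.deg v →
    H.mtch (e v) i = (e (G.mtch v i).1, (G.mtch v i).2)

/-! Equality of depth-`t` views is the `t`-th iterate, from the trivial relation, of the monotone
operator of partition refinement. Once an iterate has no more classes than its predecessor, the
two coincide and the sequence is constant from there on. So the number of classes, starting from
one, strictly grows until the limit relation, which has `n̂` classes, is reached; this takes at most
`n̂ - 1` steps. -/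

section SetoidRefinement

variable {α : Type*} {r s : Setoid α}

theorem map_of_le_surjective (h : r ≤ s) : (Setoid.map_of_le h).Surjective :=
  Quotient.ind fun a => ⟨Quotient.mk r a, rfl⟩

theorem finite_quotient_of_le [Finite (Quotient r)] (h : r ≤ s) : Finite (Quotient s) :=
  .of_surjective (Setoid.map_of_le h) (map_of_le_surjective h)

theorem card_quotient_le_of_le [Finite (Quotient r)] (h : r ≤ s) :
    Nat.card (Quotient s) ≤ Nat.card (Quotient r) :=
  Nat.card_le_card_of_surjective (Setoid.map_of_le h) (map_of_le_surjective h)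

theorem eq_of_le_of_card_quotient_eq [Finite (Quotient r)] (h : r ≤ s)
    (hcard : Nat.card (Quotient r) = Nat.card (Quotient s)) : r = s := by
  have hinj : (Setoid.map_of_le h).Injective :=
    ((Nat.bijective_iff_surjective_and_card _).mpr ⟨map_of_le_surjective h, hcard⟩).injective
  exact le_antisymm h fun _ _ hs => Quotient.exact (hinj (Quotient.sound hs))

theorem eq_of_le_of_card_quotient_sub_one_eq [Finite (Quotient r)] (h : r ≤ s)
    (hcard : Nat.card (Quotient r) - 1 = Nat.card (Quotient s) - 1) : r = s := by
  rcases isEmpty_or_nonempty α with _ | _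
  · exact Setoid.ext isEmptyElim
  · have := finite_quotient_of_le h
    have : Nonempty (Quotient r) := .map (Quotient.mk r) ‹_›
    have : Nonempty (Quotient s) := .map (Quotient.mk s) ‹_›
    have hr : 0 < Nat.card (Quotient r) := Nat.card_pos
    have hs : 0 < Nat.card (Quotient s) := Nat.card_pos
    exact eq_of_le_of_card_quotient_eq h (by omega)

theorem iterate_top_card_quotient_sub_one_eq_iInf {Φ : Setoid α → Setoid α} (hΦ : Monotone Φ)
    [Finite (Quotient (⨅ t, Φ^[t] ⊤))] :
    Φ^[Nat.card (Quotient (⨅ t, Φ^[t] ⊤)) - 1] ⊤ = ⨅ t, Φ^[t] ⊤ := by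
  set b := Nat.card (Quotient (⨅ t, Φ^[t] ⊤)) - 1
  have hanti : Antitone fun t => Φ^[t] ⊤ := hΦ.antitone_iterate_of_map_le le_top
  have hinf (t : ℕ) : ⨅ t, Φ^[t] ⊤ ≤ Φ^[t] ⊤ := iInf_le (fun t => Φ^[t] ⊤) t
  have hfin (t : ℕ) : Finite (Quotient (Φ^[t] ⊤)) := finite_quotient_of_le (hinf t)
  let f (t : ℕ) : ℕ := Nat.card (Quotient (Φ^[t] ⊤)) - 1
  have hmono : Monotone f := fun _ _ hst =>
    Nat.sub_le_sub_right (card_quotient_le_of_le (hanti hst)) 1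
  have hbound (t : ℕ) : f t ≤ b :=
    Nat.sub_le_sub_right (card_quotient_le_of_le (hinf t)) 1
  have eq_of_card_eq {s t : ℕ} (hst : s ≤ t) (h : f t = f s) : Φ^[t] ⊤ = Φ^[s] ⊤ :=
    eq_of_le_of_card_quotient_sub_one_eq (hanti hst) h
  have hstab (t : ℕ) (h : f t = f (t + 1)) : f (t + 1) = f (t + 2) := by
    have hfix : Φ^[t + 1] ⊤ = Φ^[t] ⊤ := eq_of_card_eq (t.le_add_right 1) h.symm
    have hfix_succ : Φ^[t + 2] ⊤ = Φ^[t + 1] ⊤ := by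
      simpa only [Function.iterate_succ_apply'] using congrArg Φ hfix
    simp only [f, hfix_succ]
  refine le_antisymm (le_iInf fun t => ?_) (hinf b)
  rcases le_total t b with htb | hbt
  · exact hanti htb
  · exact (eq_of_card_eq hbt (Nat.stabilises_of_monotone hmono hbound hstab hbt)).ge

end SetoidRefinement

theorem map_range_eq_map_range_iff {β : Type*} {f g : ℕ → β} {m n : ℕ} :
    (List.range m).map f = (List.range n).map g ↔ m = n ∧ ∀ i < m, f i = g i := by
  constructor
  · intro h
    obtain rfl : m = n := by simpa using congrArg List.length h
    exact ⟨rfl, by simpa using h⟩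
  · rintro ⟨rfl, h⟩
    simpa using h

namespace PortGraph

variable (G : PortGraph)

/-- One step of partition refinement: two nodes are related when they have the same degree and
each port leads, through equal port numbers at the far end, to `s`-related nodes. -/
def refinement (s : Setoid (Fin G.n)) : Setoid (Fin G.n) where
  r u v := G.deg u = G.deg v ∧ ∀ i < G.deg u,
    (G.mtch u i).2 = (G.mtch v i).2 ∧ s (G.mtch u i).1 (G.mtch v i).1
  iseqv :=
    { refl := fun _ => ⟨rfl, fun _ _ => ⟨rfl, s.refl _⟩⟩
      symm := fun ⟨hdeg, h⟩ => ⟨hdeg.symm, fun i hi =>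
        have ⟨hport, hs⟩ := h i (hdeg ▸ hi)
        ⟨hport.symm, s.symm hs⟩⟩
      trans := fun ⟨hdeg, h⟩ ⟨hdeg', h'⟩ => ⟨hdeg.trans hdeg', fun i hi =>
        have ⟨hport, hs⟩ := h i hi
        have ⟨hport', hs'⟩ := h' i (hdeg ▸ hi)
        ⟨hport.trans hport', s.trans hs hs'⟩⟩ }

theorem refinement_mono : Monotone G.refinement :=
  fun _ _ hst _ _ ⟨hdeg, h⟩ => ⟨hdeg, fun i hi => ⟨(h i hi).1, hst (h i hi).2⟩⟩

theorem view_succ_eq_iff (t : ℕ) (u v : Fin G.n) :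
    G.view (t + 1) u = G.view (t + 1) v ↔ G.deg u = G.deg v ∧ ∀ i < G.deg u,
      (G.mtch u i).2 = (G.mtch v i).2 ∧ G.view t (G.mtch u i).1 = G.view t (G.mtch v i).1 := by
  simp [view, map_range_eq_map_range_iff]

theorem ker_view_succ (t : ℕ) :
    Setoid.ker (G.view (t + 1)) = G.refinement (Setoid.ker (G.view t)) :=
  Setoid.ext (G.view_succ_eq_iff t)

theorem ker_view_eq_iterate_refinement (t : ℕ) :
    Setoid.ker (G.view t) = G.refinement^[t] ⊤ := by
  induction t with
  | zero => exact top_le_iff.mp fun _ _ _ => rfl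
  | succ t ih => rw [ker_view_succ, ih, Function.iterate_succ_apply']

theorem viewSetoid_eq_iInf_ker_view : G.viewSetoid = ⨅ t, Setoid.ker (G.view t) :=
  le_antisymm (le_iInf fun t _ _ h => h t)
    fun _ _ h t => iInf_le (fun t => Setoid.ker (G.view t)) t h

theorem ker_view_nhat_sub_one : Setoid.ker (G.view (G.nhat - 1)) = G.viewSetoid := by
  have hview : G.viewSetoid = ⨅ t, G.refinement^[t] ⊤ := by
    simp only [viewSetoid_eq_iInf_ker_view, ker_view_eq_iterate_refinement]
  rw [ker_view_eq_iterate_refinement, nhat, hview]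
  exact iterate_top_card_quotient_sub_one_eq_iInf G.refinement_mono

end PortGraph

/-- If the truncated views at depth `n̂ - 1` of two nodes coincide, where
`n̂` is the number of classes of the equal-views relation, then their views coincide. -/
theorem truncated_view_eq_of_depth_nhat (G : PortGraph) (u v : Fin G.n)
    (h : G.view (G.nhat - 1) u = G.view (G.nhat - 1) v) :
    ∀ t : ℕ, G.view t u = G.view t v :=
  G.ker_view_nhat_sub_one.le h
end

section
/- There exists a computable function τ : ℕ × ℕ → ℕ (one may take τ(n,i) = 2(i+1)·n^n) and a family of single-agent protocols σ_{n,i}, for n ≥ 1 and identities i ≥ 1, such that for every port-labeled graph G with n nodes: (a) for every start node, the execution of σ_{n,i} performs no halting before round τ(n,i), is located at its start node at round τ(n,i), and remains there in all subsequent rounds; and (b) for any two distinct identities i ≠ j and any start nodes u and v, there is a round r ≤ min(τ(n,i), τ(n,j)) at which the execution of σ_{n,i} from u and the execution of σ_{n,j} from v occupy the same node (the two agents meet). -/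
/-- An observation of the agent: the degree of the current node and the port
number through which the agent entered it (`0` in the initial round). -/
abbrev Obs : Type := ℕ × ℕ

/-- Actions of a (non-deciding) mobile agent: stay, halt, or move through port `p`. -/
inductive RAction : Type
  | stay
  | halt
  | move (p : ℕ)

abbrev RProtocol : Type := List Obs → RAction

structure RState (G : PortGraph) where
  pos : Fin G.n
  entry : ℕ
  hist : List Obs

def PortGraph.stepR (G : PortGraph) (σ : RProtocol) (c : RState G) : RState G :=
  let next : Fin G.n × ℕ :=
    match σ c.hist with
    | .stay => (c.pos, c.entry)
    | .halt => (c.pos, c.entry)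
    | .move p =>
        if 1 ≤ p ∧ p - 1 < G.deg c.pos then
          ((G.mtch c.pos (p - 1)).1, (G.mtch c.pos (p - 1)).2 + 1)
        else (c.pos, c.entry)
  ⟨next.1, next.2, c.hist ++ [(G.deg next.1, next.2)]⟩

def PortGraph.runR (G : PortGraph) (σ : RProtocol) (v : Fin G.n) : ℕ → RState G
  | 0 => ⟨v, 0, [(G.deg v, 0)]⟩
  | t + 1 => G.stepR σ (G.runR σ v t)

def PortGraph.actR (G : PortGraph) (σ : RProtocol) (v : Fin G.n) (t : ℕ) : RAction :=
  σ (G.runR σ v t).hist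

/-! Some agent stays put while another one sees the whole graph. Time is cut into periods of
`2 * N ^ N` rounds, and the agent with identity `i` explores during period `i` and idles in all
others; of two agents, the one with the smaller identity explores while the other still waits at its
start node. An exploration tries all `N ^ (N - 1)` port sequences of length `N - 1` over `N` ports
(one of them traces a simple path to any given node), and retraces each of them before the next. -/

namespace PortGraph

variable (G : PortGraph)

/-- The simple graph underlying a port-labeled graph, which gives access to the existence of
simple paths between its nodes. -/
def toSimpleGraph : SimpleGraph (Fin G.n) where
  Adj := G.Adj
  symm := ⟨by
    rintro u _ ⟨i, hi, rfl⟩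
    exact ⟨(G.mtch u i).2, G.mtch_lt u i hi, by rw [G.mtch_invol u i hi]⟩⟩
  loopless := ⟨fun u ⟨i, hi, h⟩ => G.no_loops u i hi h⟩

theorem toSimpleGraph_preconnected : G.toSimpleGraph.Preconnected := fun u v =>
  (SimpleGraph.reachable_iff_reflTransGen u v).2 (G.connected u v)

theorem deg_le (v : Fin G.n) : G.deg v ≤ G.n := by
  have neighbor_injective : Function.Injective fun i : Fin (G.deg v) => (G.mtch v i).1 :=
    fun i j h => Fin.ext (G.no_multi v i j i.2 j.2 h)
  simpa only [Fintype.card_fin] using Fintype.card_le_of_injective _ neighbor_injective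

variable {G} {σ : RProtocol} {u : Fin G.n} {s t p L : ℕ}

theorem runR_hist (σ : RProtocol) (u : Fin G.n) (t : ℕ) :
    (G.runR σ u t).hist =
      (List.range (t + 1)).map fun s => (G.deg (G.runR σ u s).pos, (G.runR σ u s).entry) := by
  induction t with
  | zero => rfl
  | succ t ih =>
    rw [List.range_succ, List.map_append, ← ih]
    rfl

theorem runR_hist_length (σ : RProtocol) (u : Fin G.n) (t : ℕ) :
    (G.runR σ u t).hist.length = t + 1 := by
  rw [runR_hist, List.length_map, List.length_range]

theorem runR_hist_getD (σ : RProtocol) (u : Fin G.n) (h : s ≤ t) :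
    (G.runR σ u t).hist.getD s (0, 0) = (G.deg (G.runR σ u s).pos, (G.runR σ u s).entry) := by
  rw [runR_hist, List.getD_eq_getElem _ _ (by simpa using Nat.lt_succ_of_le h), List.getElem_map,
    List.getElem_range]

theorem runR_pos_succ_of_stay (h : G.actR σ u t = .stay) :
    (G.runR σ u (t + 1)).pos = (G.runR σ u t).pos := by
  rw [actR] at h
  simp only [runR, stepR, h]

theorem runR_pos_succ_of_deg_eq_zero (h : G.deg (G.runR σ u t).pos = 0) :
    (G.runR σ u (t + 1)).pos = (G.runR σ u t).pos := by
  simp only [runR, stepR, h, Nat.not_lt_zero, and_false, if_false]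
  split <;> rfl

theorem runR_succ_of_move (h : G.actR σ u t = .move (p + 1))
    (hp : p < G.deg (G.runR σ u t).pos) :
    (G.runR σ u (t + 1)).pos = (G.mtch (G.runR σ u t).pos p).1 ∧
      (G.runR σ u (t + 1)).entry = (G.mtch (G.runR σ u t).pos p).2 + 1 := by
  rw [actR] at h
  simp [runR, stepR, h, hp]

theorem runR_pos_succ_of_backtrack {c : ℕ}
    (hs : G.actR σ u s = .move (c % G.deg (G.runR σ u s).pos + 1))
    (ht : G.actR σ u t = .move (G.runR σ u (s + 1)).entry)
    (hpos : (G.runR σ u t).pos = (G.runR σ u (s + 1)).pos) :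
    (G.runR σ u (t + 1)).pos = (G.runR σ u s).pos := by
  rcases Nat.eq_zero_or_pos (G.deg (G.runR σ u s).pos) with hdeg | hdeg
  · have hstuck := hpos.trans (runR_pos_succ_of_deg_eq_zero hdeg)
    rw [runR_pos_succ_of_deg_eq_zero (by rw [hstuck, hdeg]), hstuck]
  · have hport := Nat.mod_lt c hdeg
    obtain ⟨hpos_succ, hentry⟩ := runR_succ_of_move hs hport
    rw [hpos_succ] at hpos
    rw [hentry] at ht
    rw [(runR_succ_of_move ht (by rw [hpos]; exact G.mtch_lt _ _ hport)).1, hpos,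
      G.mtch_invol _ _ hport]

/-- From round `s` on, for `L` rounds, the agent leaves through the ports prescribed by `c`.
Ports are counted from `0` and reduced modulo the current degree, so that a prescribed move
fails only at an isolated node. -/
def FollowsPorts (G : PortGraph) (σ : RProtocol) (u : Fin G.n) (s L : ℕ) (c : ℕ → ℕ) : Prop :=
  ∀ k < L, G.actR σ u (s + k) = .move (c k % G.deg (G.runR σ u (s + k)).pos + 1)

theorem FollowsPorts.mono {c : ℕ → ℕ} {M : ℕ} (h : G.FollowsPorts σ u s L c) (hL : M ≤ L) :
    G.FollowsPorts σ u s M c := fun k hk => h k (hk.trans_le hL)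

theorem FollowsPorts.pos_eq_getVert {c : ℕ → ℕ} {v w : Fin G.n} {q : G.toSimpleGraph.Walk v w}
    (h : G.FollowsPorts σ u s q.length c) (hstart : (G.runR σ u s).pos = v)
    (hc : ∀ k < q.length, c k < G.deg (q.getVert k) ∧
      (G.mtch (q.getVert k) (c k)).1 = q.getVert (k + 1)) :
    ∀ k ≤ q.length, (G.runR σ u (s + k)).pos = q.getVert k := by
  intro k hk
  induction k with
  | zero => simpa using hstart
  | succ k ih =>
    obtain ⟨hport, hnext⟩ := hc k hk
    have hpos := ih (Nat.le_of_succ_le hk)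
    have hact := h k hk
    rw [hpos, Nat.mod_eq_of_lt hport] at hact
    rw [← add_assoc, (runR_succ_of_move hact (by rwa [hpos])).1, hpos, hnext]

theorem FollowsPorts.pos_roundTrip {c : ℕ → ℕ} (h : G.FollowsPorts σ u s L c)
    (hback : ∀ j k, j + k + 1 = L →
      G.actR σ u (s + L + j) = .move (G.runR σ u (s + k + 1)).entry) :
    (G.runR σ u (s + L + L)).pos = (G.runR σ u s).pos := by
  have hmirror : ∀ j k, j + k = L → (G.runR σ u (s + L + j)).pos = (G.runR σ u (s + k)).pos := by
    intro j
    induction j with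
    | zero => rintro k rfl; simp
    | succ j ih =>
      intro k hjk
      exact runR_pos_succ_of_backtrack (h k (by lia)) (hback j k (by lia)) (ih (k + 1) (by lia))
  exact hmirror L 0 rfl

end PortGraph

namespace RProtocol

/-- The protocol that idles for `D` rounds and then behaves like `σ`. The observations made while
idling are dropped, so `σ` sees a history beginning with entry port `0`. -/
def delay (D : ℕ) (σ : RProtocol) : RProtocol := fun h =>
  if h.length ≤ D then .stay else σ (h.drop D)

/-- The exploration of all graphs with at most `N` nodes. Block `b < N ^ (N - 1)` consists of the
rounds `b * (2 * N) + k` with `k < 2 * N`: in its first half the agent follows the base-`N` digits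
of `b`, least significant first, and in its second half it undoes these moves in reverse order:
the move undone in round `t` is the one that led to the observation `2 * (k - N)` rounds earlier. -/
def explore (N : ℕ) : RProtocol := fun h =>
  let t := h.length - 1
  let b := t / (2 * N)
  let k := t % (2 * N)
  if 2 * N ^ N ≤ t then .stay
  else if k < N then .move (b / N ^ k % N % (h.getD t (0, 0)).1 + 1)
  else .move (h.getD (t - 2 * (k - N)) (0, 0)).2

/-- The protocol of the agent with identity `i` in graphs with at most `N` nodes. -/
def rendezvous (N i : ℕ) : RProtocol := delay (i * (2 * N ^ N)) (explore N)

theorem explore_ne_halt (N : ℕ) (h : List Obs) : explore N h ≠ .halt := by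
  unfold explore
  dsimp only
  split_ifs <;> exact RAction.noConfusion

theorem rendezvous_ne_halt (N i : ℕ) (h : List Obs) : rendezvous N i h ≠ .halt := by
  unfold rendezvous delay
  split_ifs
  · exact RAction.noConfusion
  · exact explore_ne_halt N _

end RProtocol

theorem exists_digits_eq_mod {N : ℕ} (hN : 0 < N) (L : ℕ) (c : ℕ → ℕ) :
    ∃ b < N ^ L, ∀ k < L, b / N ^ k % N = c k % N := by
  let digits : Fin L → Fin N := fun k => ⟨c k % N, Nat.mod_lt _ hN⟩
  refine ⟨finFunctionFinEquiv digits, Fin.is_lt _, fun k hk => ?_⟩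
  exact congrArg Fin.val (congrFun (finFunctionFinEquiv.symm_apply_apply digits) ⟨k, hk⟩)

theorem pow_pred_mul_two_mul_self {N : ℕ} (hN : 0 < N) : N ^ (N - 1) * (2 * N) = 2 * N ^ N := by
  rw [mul_left_comm, pow_sub_one_mul hN.ne']

theorem block_round_lt {N b k : ℕ} (hb : b < N ^ (N - 1)) (hk : k < 2 * N) :
    b * (2 * N) + k < 2 * N ^ N := by
  calc b * (2 * N) + k < (b + 1) * (2 * N) := by lia
    _ ≤ N ^ (N - 1) * (2 * N) := Nat.mul_le_mul_right _ hb
    _ = 2 * N ^ N := pow_pred_mul_two_mul_self (by lia)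

namespace PortGraph

open RProtocol

variable {G : PortGraph} {u : Fin G.n} {D N t b k : ℕ}

theorem runR_delay_of_le (σ : RProtocol) (u : Fin G.n) (ht : t ≤ D) :
    G.runR (delay D σ) u t = ⟨u, 0, List.replicate (t + 1) (G.deg u, 0)⟩ := by
  induction t with
  | zero => rfl
  | succ t ih =>
    rw [runR, ih (Nat.le_of_succ_le ht)]
    simp [stepR, delay, ht, List.replicate_succ']

theorem runR_delay_add (D : ℕ) (σ : RProtocol) (u : Fin G.n) (t : ℕ) :
    G.runR (delay D σ) u (D + t) =
      ⟨(G.runR σ u t).pos, (G.runR σ u t).entry,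
        List.replicate D (G.deg u, 0) ++ (G.runR σ u t).hist⟩ := by
  induction t with
  | zero => rw [add_zero, runR_delay_of_le σ u le_rfl, List.replicate_succ']; rfl
  | succ t ih =>
    rw [← add_assoc, runR, ih]
    simp [runR, stepR, delay, runR_hist_length]

theorem actR_explore_of_ge (u : Fin G.n) (ht : 2 * N ^ N ≤ t) :
    G.actR (explore N) u t = .stay := by
  simp only [actR, explore, runR_hist_length, Nat.add_sub_cancel, if_pos ht]

theorem followsPorts_explore (u : Fin G.n) (hb : b < N ^ (N - 1)) :
    G.FollowsPorts (explore N) u (b * (2 * N)) N fun k => b / N ^ k % N := by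
  intro k hk
  have hround := block_round_lt hb (show k < 2 * N by lia)
  have hquot : (b * (2 * N) + k) / (2 * N) = b := by
    rw [mul_comm, Nat.mul_add_div (by lia), Nat.div_eq_of_lt (by lia), add_zero]
  have hrem : (b * (2 * N) + k) % (2 * N) = k := by
    rw [Nat.mul_add_mod_self_right, Nat.mod_eq_of_lt (by lia)]
  rw [actR]
  unfold explore
  simp only [runR_hist_length, Nat.add_sub_cancel, hquot, hrem, if_neg hround.not_ge, if_pos hk,
    runR_hist_getD _ _ le_rfl]

theorem actR_explore_backtrack (u : Fin G.n) (hb : b < N ^ (N - 1)) {j k : ℕ}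
    (hjk : j + k + 1 = N) :
    G.actR (explore N) u (b * (2 * N) + N + j) =
      .move (G.runR (explore N) u (b * (2 * N) + k + 1)).entry := by
  have hround := block_round_lt hb (show N + j < 2 * N by lia)
  rw [← add_assoc] at hround
  have hrem : (b * (2 * N) + N + j) % (2 * N) = N + j := by
    rw [add_assoc, Nat.mul_add_mod_self_right, Nat.mod_eq_of_lt (by lia)]
  have hmirror : b * (2 * N) + N + j - 2 * (N + j - N) = b * (2 * N) + k + 1 := by lia
  rw [actR]
  unfold explore
  simp only [runR_hist_length, Nat.add_sub_cancel, hrem, hmirror, if_neg hround.not_ge,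
    if_neg (show ¬ N + j < N by lia)]
  rw [runR_hist_getD _ _ (by lia)]

theorem runR_explore_pos_block (u : Fin G.n) (hb : b ≤ N ^ (N - 1)) :
    (G.runR (explore N) u (b * (2 * N))).pos = u := by
  induction b with
  | zero => rw [zero_mul]; rfl
  | succ b ih =>
    rw [show (b + 1) * (2 * N) = b * (2 * N) + N + N by ring,
      (followsPorts_explore u hb).pos_roundTrip fun _ _ => actR_explore_backtrack u hb,
      ih (Nat.le_of_succ_le hb)]

theorem runR_explore_pos_of_ge (hN : 0 < N) (u : Fin G.n) (ht : 2 * N ^ N ≤ t) :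
    (G.runR (explore N) u t).pos = u := by
  induction t, ht using Nat.le_induction with
  | base => rw [← pow_pred_mul_two_mul_self hN, runR_explore_pos_block u le_rfl]
  | succ t ht ih => rw [runR_pos_succ_of_stay (actR_explore_of_ge u ht), ih]

theorem exists_runR_explore_pos_eq (hN : G.n ≤ N) (u v : Fin G.n) :
    ∃ t < 2 * N ^ N, (G.runR (explore N) u t).pos = v := by
  obtain ⟨q, hq⟩ := (G.toSimpleGraph_preconnected u v).exists_isPath
  have hlength : q.length < N := by simpa using hq.length_lt.trans_le (by simpa using hN)
  have hports : ∀ k < q.length, ∃ p < G.deg (q.getVert k),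
      (G.mtch (q.getVert k) p).1 = q.getVert (k + 1) := fun k hk => q.adj_getVert_succ hk
  choose! c hc using hports
  obtain ⟨b, hb, hdigit⟩ := exists_digits_eq_mod (G.npos.trans_le hN) (N - 1) c
  have hdigit_eq : ∀ k < q.length, b / N ^ k % N = c k := fun k hk => by
    rw [hdigit k (by lia), Nat.mod_eq_of_lt ((hc k hk).1.trans_le ((G.deg_le _).trans hN))]
  refine ⟨b * (2 * N) + q.length, block_round_lt hb (by lia), ?_⟩
  rw [((followsPorts_explore u hb).mono hlength.le).pos_eq_getVert
    (runR_explore_pos_block u hb.le) (fun k hk => by rw [hdigit_eq k hk]; exact hc k hk)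
    q.length le_rfl, q.getVert_length]

theorem runR_rendezvous_pos_of_ge (hN : 0 < N) {i : ℕ} (u : Fin G.n)
    (ht : 2 * (i + 1) * N ^ N ≤ t) : (G.runR (rendezvous N i) u t).pos = u := by
  obtain ⟨t, rfl⟩ := Nat.exists_eq_add_of_le (show i * (2 * N ^ N) ≤ t by lia)
  rw [rendezvous, runR_delay_add]
  exact runR_explore_pos_of_ge hN u (by lia)

theorem exists_rendezvous_of_lt (hN : G.n ≤ N) {i j : ℕ} (hij : i < j) (u v : Fin G.n) :
    ∃ r ≤ 2 * (i + 1) * N ^ N,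
      (G.runR (rendezvous N i) u r).pos = (G.runR (rendezvous N j) v r).pos := by
  obtain ⟨t, ht, hpos⟩ := exists_runR_explore_pos_eq hN u v
  have hr : i * (2 * N ^ N) + t ≤ (i + 1) * (2 * N ^ N) := by lia
  have hidle : i * (2 * N ^ N) + t ≤ j * (2 * N ^ N) :=
    hr.trans (Nat.mul_le_mul_right _ hij)
  refine ⟨i * (2 * N ^ N) + t, by lia, ?_⟩
  rw [rendezvous, rendezvous, runR_delay_add, runR_delay_of_le _ _ hidle, hpos]

end PortGraph

theorem computable₂_rendezvousTime : Computable₂ fun n i : ℕ => 2 * (i + 1) * n ^ n := by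
  have hpow : Primrec₂ ((· ^ ·) : ℕ → ℕ → ℕ) := Primrec₂.unpaired'.1 Nat.Primrec.pow
  exact (Primrec.nat_mul.comp
    (Primrec.nat_mul.comp (Primrec.const 2) (Primrec.succ.comp Primrec.snd))
    (hpow.comp Primrec.fst Primrec.fst)).to₂.to_comp

theorem exists_rendezvous_protocol_general :
    ∃ σ : ℕ → ℕ → RProtocol, ∀ (N : ℕ) (G : PortGraph), G.n ≤ N →
      (∀ (i : ℕ) (u : Fin G.n),
        (∀ s, G.actR (σ N i) u s ≠ RAction.halt) ∧
        ∀ r, 2 * (i + 1) * N ^ N ≤ r → (G.runR (σ N i) u r).pos = u) ∧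
      ∀ i j : ℕ, i ≠ j → ∀ u v : Fin G.n,
        ∃ r ≤ min (2 * (i + 1) * N ^ N) (2 * (j + 1) * N ^ N),
          (G.runR (σ N i) u r).pos = (G.runR (σ N j) v r).pos := by
  refine ⟨RProtocol.rendezvous, fun N G hN => ⟨fun i u => ⟨fun s => ?_, fun r hr => ?_⟩, ?_⟩⟩
  · exact RProtocol.rendezvous_ne_halt N i _
  · exact PortGraph.runR_rendezvous_pos_of_ge (G.npos.trans_le hN) u hr
  · intro i j hij u v
    wlog hlt : i < j generalizing i j u v
    · obtain ⟨r, hr, hmeet⟩ := this j i hij.symm v u (by lia)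
      exact ⟨r, by rwa [min_comm], hmeet.symm⟩
    · obtain ⟨r, hr, hmeet⟩ := PortGraph.exists_rendezvous_of_lt hN hlt u v
      exact ⟨r, le_min hr (hr.trans (by gcongr)), hmeet⟩

/-- There are a computable function `τ` and protocols `σ n i` (for an
agent with identity `i` in a graph of known size `n`) such that in every `n`-node graph:
(a) the agent never halts before round `τ n i`, is back at its start node at round
`τ n i` and stays there afterwards; and (b) two agents with distinct identities `i ≠ j`
started anywhere meet by round `min (τ n i) (τ n j)`. -/
theorem exists_rendezvous_protocol :
    ∃ (τ : ℕ → ℕ → ℕ) (σ : ℕ → ℕ → RProtocol),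
      Computable₂ τ ∧
      ∀ G : PortGraph,
        (∀ i : ℕ, 1 ≤ i → ∀ u : Fin G.n,
          (∀ s : ℕ, s < τ G.n i → G.actR (σ G.n i) u s ≠ RAction.halt) ∧
          ∀ r : ℕ, τ G.n i ≤ r → (G.runR (σ G.n i) u r).pos = u) ∧
        (∀ i j : ℕ, 1 ≤ i → 1 ≤ j → i ≠ j → ∀ u v : Fin G.n,
          ∃ r : ℕ, r ≤ min (τ G.n i) (τ G.n j) ∧
            (G.runR (σ G.n i) u r).pos = (G.runR (σ G.n j) v r).pos) := by
  obtain ⟨σ, hσ⟩ := exists_rendezvous_protocol_general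
  exact ⟨fun n i => 2 * (i + 1) * n ^ n, σ, computable₂_rendezvousTime, fun G =>
    ⟨fun i _ u => ⟨fun s _ => ((hσ G.n G le_rfl).1 i u).1 s, ((hσ G.n G le_rfl).1 i u).2⟩,
      fun i j _ _ => (hσ G.n G le_rfl).2 i j⟩⟩
end
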